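/- arXiv:1305.4714 — 2 statements merged into one kernel-verified Lean document; each statement's English description precedes it below -/
import Mathlib

section
/- (Proposition 1, existence of asymptotic momenta) Assume Assumption A(μ) with 1/2 < μ ≤ 1. Let (y,η) : ℝ → ℝ^d × ℝ^d solve the Hamilton equations for k with η(0) = ξ₀ ≠ 0, and suppose there exist c, C > 0 such that |y(t)| ≥ c|t| − C for all t ∈ ℝ. Then the limits ξ₊ = lim_{t→+∞} η(t) and ξ₋ = lim_{t→−∞} η(t) exist in ℝ^d. -/
open Filter MeasureTheory
open scoped Topology BigOperators

noncomputable section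

abbrev E (d : ℕ) := EuclideanSpace ℝ (Fin d)

/-- Japanese bracket `⟨x⟩ = (1+|x|²)^{1/2}`. -/
def jap {d : ℕ} (x : E d) : ℝ := Real.sqrt (1 + ‖x‖ ^ 2)

/-- Japanese bracket of a real number. -/
def japr (t : ℝ) : ℝ := Real.sqrt (1 + t ^ 2)

/-- The kinetic energy symbol `k(x,ξ) = (1/2) Σ a_{mn}(x) ξ_m ξ_n`. -/
def kk {d : ℕ} (a : Fin d → Fin d → E d → ℝ) (x ξ : E d) : ℝ :=
  (1 / 2) * ∑ m : Fin d, ∑ n : Fin d, a m n x * ξ m * ξ n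

/-- `(y, η)` solves the Hamilton equations for the Hamiltonian `h`. -/
def IsHamiltonSol {d : ℕ} (h : E d → E d → ℝ) (y η : ℝ → E d) : Prop :=
  ∀ t : ℝ, HasDerivAt y (gradient (h (y t)) (η t)) t ∧
    HasDerivAt η (-gradient (fun x => h x (η t)) (y t)) t

/-- Assumption A(μ): smoothness, symmetry, positive definiteness, and symbol-type decay. -/
def AssumptionA {d : ℕ} (μ : ℝ) (a : Fin d → Fin d → E d → ℝ) (V : E d → ℝ) : Prop :=
  (∀ m n, ContDiff ℝ (⊤ : ℕ∞) (a m n)) ∧ ContDiff ℝ (⊤ : ℕ∞) V ∧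
  (∀ m n x, a m n x = a n m x) ∧
  (∀ (x ξ : E d), ξ ≠ 0 → 0 < ∑ m : Fin d, ∑ n : Fin d, a m n x * ξ m * ξ n) ∧
  (∀ m n (j : ℕ), ∃ C > 0, ∀ x : E d,
    ‖iteratedFDeriv ℝ j (fun z => a m n z - if m = n then (1 : ℝ) else 0) x‖
      ≤ C * jap x ^ (-μ - (j : ℝ))) ∧
  (∀ j : ℕ, ∃ C > 0, ∀ x : E d,
    ‖iteratedFDeriv ℝ j V x‖ ≤ C * jap x ^ (2 - μ - (j : ℝ)))

/-!
The Hamiltonian is conserved along the flow, so if its `x`-gradient is `O(|x|^(-μ-1))` relative to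
its own value, then along a trajectory escaping at linear speed the force `η'` is
`O(|t|^(-μ-1))`. This is integrable near `±∞` as soon as `μ > 0`, so `η` converges at both ends.
For the kinetic energy `k` the relative bound holds because `k` is uniformly elliptic near
infinity, where the coefficients are close to `δ`, while `∇ₓk` is quadratic in `ξ`.
-/

section AsymptoticMomenta

open Asymptotics Bornology

theorem isBigO_rpow_rpow_of_nonpos {α : Type*} {l : Filter α} {f g : α → ℝ} {r : ℝ} (hr : r ≤ 0)
    (hf : ∀ᶠ x in l, 0 < f x) (hg : 0 ≤ᶠ[l] g) (h : f =O[l] g) :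
    (fun x => g x ^ r) =O[l] fun x => f x ^ r := by
  have hinv : (fun x => (g x ^ (-r))⁻¹) =O[l] fun x => (f x ^ (-r))⁻¹ := by
    refine (h.rpow (neg_nonneg.2 hr) hg).inv_rev ?_
    filter_upwards [hf] with x hx h0
    exact absurd h0 (Real.rpow_pos_of_pos hx _).ne'
  refine hinv.congr' ?_ ?_
  · filter_upwards [hg] with x hx
    rw [Real.rpow_neg hx, inv_inv]
  · filter_upwards [hf] with x hx
    rw [Real.rpow_neg hx.le, inv_inv]

theorem tendsto_cobounded_of_isBigO {α F G : Type*} [SeminormedAddCommGroup F]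
    [SeminormedAddCommGroup G] {l : Filter α} {f : α → F} {g : α → G}
    (hf : Tendsto f l (cobounded F)) (h : f =O[l] g) : Tendsto g l (cobounded G) := by
  obtain ⟨M, hM, hfg⟩ := h.exists_pos
  rw [← tendsto_norm_atTop_iff_cobounded] at hf ⊢
  exact (tendsto_const_mul_atTop_of_pos hM).1 (tendsto_atTop_mono' l hfg.bound hf)

theorem isBigO_cobounded_of_mul_norm_sub_le {F G : Type*} [SeminormedAddCommGroup F]
    [SeminormedAddCommGroup G] {f : F → G} {c C : ℝ} (hc : 0 < c)
    (h : ∀ x, c * ‖x‖ - C ≤ ‖f x‖) : (fun x => x) =O[cobounded F] f := by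
  refine IsBigO.of_bound (2 / c) ?_
  filter_upwards [tendsto_norm_cobounded_atTop.eventually_ge_atTop (2 * C / c)] with x hx
  rw [div_le_iff₀ hc] at hx
  rw [div_mul_eq_mul_div, le_div_iff₀ hc]
  linarith [h x]

section Convergence

variable {F : Type*} [NormedAddCommGroup F] [NormedSpace ℝ F] [CompleteSpace F] {f : ℝ → F} {s : ℝ}

theorem exists_tendsto_atTop_of_deriv_isBigO_rpow (hf : ∀ᶠ t in atTop, DifferentiableAt ℝ f t)
    (hs : s < -1) (h : deriv f =O[atTop] fun t => ‖t‖ ^ s) : ∃ l, Tendsto f atTop (𝓝 l) := by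
  have hpow : (fun t : ℝ => ‖t‖ ^ s) =ᶠ[atTop] fun t => t ^ s := by
    filter_upwards [eventually_ge_atTop 0] with t ht
    rw [Real.norm_of_nonneg ht]
  have hint : IntegrableAtFilter (deriv f) atTop :=
    (h.trans_eventuallyEq hpow).integrableAtFilter
      (stronglyMeasurable_deriv f).stronglyMeasurableAtFilter
      (integrableAtFilter_rpow_atTop_iff.2 hs)
  obtain ⟨S, hS, hfS⟩ := hint
  obtain ⟨T, hT⟩ := eventually_atTop.1 (hf.and hS)
  exact ⟨_, tendsto_limUnder_of_hasDerivAt_of_integrableOn_Ioi (a := T)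
    (fun t ht => (hT t (Set.mem_Ioi.1 ht).le).1.hasDerivAt)
    (hfS.mono_set fun t ht => (hT t (Set.mem_Ioi.1 ht).le).2)⟩

theorem exists_tendsto_atBot_of_deriv_isBigO_rpow (hf : ∀ᶠ t in atBot, DifferentiableAt ℝ f t)
    (hs : s < -1) (h : deriv f =O[atBot] fun t => ‖t‖ ^ s) : ∃ l, Tendsto f atBot (𝓝 l) := by
  have hdiff : ∀ᶠ t in atTop, DifferentiableAt ℝ (fun t => f (-t)) t := by
    filter_upwards [tendsto_neg_atTop_atBot.eventually hf] with t ht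
    exact ht.comp t differentiable_neg.differentiableAt
  have hderiv : deriv (fun t => f (-t)) =O[atTop] fun t => ‖t‖ ^ s := by
    refine ((h.comp_tendsto tendsto_neg_atTop_atBot).neg_left).congr (fun t => ?_) fun t => ?_
    · rw [deriv_comp_neg, Function.comp_apply]
    · rw [Function.comp_apply, norm_neg]
  obtain ⟨l, hl⟩ := exists_tendsto_atTop_of_deriv_isBigO_rpow hdiff hs hderiv
  exact ⟨l, by simpa only [Function.comp_def, neg_neg] using hl.comp tendsto_neg_atBot_atTop⟩

end Convergence

section Hamiltonian

theorem fderiv_uncurry_apply_eq_inner_gradient {X Y : Type*} [NormedAddCommGroup X]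
    [InnerProductSpace ℝ X] [CompleteSpace X] [NormedAddCommGroup Y] [InnerProductSpace ℝ Y]
    [CompleteSpace Y] {h : X → Y → ℝ} {x : X} {ξ : Y}
    (hh : DifferentiableAt ℝ (Function.uncurry h) (x, ξ)) (u : X) (v : Y) :
    fderiv ℝ (Function.uncurry h) (x, ξ) (u, v) =
      inner ℝ (gradient (fun x => h x ξ) x) u + inner ℝ (gradient (h x) ξ) v := by
  have hleft : HasFDerivAt (fun x => h x ξ)
      (fderiv ℝ (Function.uncurry h) (x, ξ) ∘L .inl ℝ X Y) x :=
    HasFDerivAt.comp (f := fun x => (x, ξ)) x hh.hasFDerivAt (hasFDerivAt_prodMk_left x ξ)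
  have hright : HasFDerivAt (h x) (fderiv ℝ (Function.uncurry h) (x, ξ) ∘L .inr ℝ X Y) ξ :=
    HasFDerivAt.comp (f := fun ξ => (x, ξ)) ξ hh.hasFDerivAt (hasFDerivAt_prodMk_right x ξ)
  rw [inner_gradient_left, inner_gradient_left, hleft.fderiv, hright.fderiv]
  simp [← map_add]

variable {d : ℕ} {h : E d → E d → ℝ} {y η : ℝ → E d}

theorem IsHamiltonSol.hamiltonian_eq (hsol : IsHamiltonSol h y η)
    (hh : Differentiable ℝ (Function.uncurry h)) (s t : ℝ) : h (y s) (η s) = h (y t) (η t) := by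
  have hconst : ∀ τ, HasDerivAt (fun τ => h (y τ) (η τ)) 0 τ := fun τ => by
    obtain ⟨hy, hη⟩ := hsol τ
    have hchain := (hh (y τ, η τ)).hasFDerivAt.comp_hasDerivAt τ (hy.prodMk hη)
    rwa [fderiv_uncurry_apply_eq_inner_gradient (hh _), inner_neg_right, real_inner_comm,
      add_neg_cancel] at hchain
  exact is_const_of_deriv_eq_zero (fun τ => (hconst τ).differentiableAt)
    (fun τ => (hconst τ).deriv) s t

theorem IsHamiltonSol.deriv_momentum_isBigO (hsol : IsHamiltonSol h y η)
    (hh : Differentiable ℝ (Function.uncurry h)) {M r : ℝ} (hr : r ≤ 0)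
    (hgrad : ∀ᶠ x in cobounded (E d), ∀ ξ,
      ‖gradient (fun x => h x ξ) x‖ ≤ M * ‖x‖ ^ r * |h x ξ|)
    {l : Filter ℝ} (hl : l ≤ cobounded ℝ) (hy : (fun t => t) =O[l] y) :
    deriv η =O[l] fun t => ‖t‖ ^ r := by
  have hpos : ∀ᶠ t : ℝ in l, 0 < ‖t‖ := hl (tendsto_norm_cobounded_atTop.eventually_gt_atTop 0)
  have hyr : (fun t => ‖y t‖ ^ r) =O[l] fun t => ‖t‖ ^ r :=
    isBigO_rpow_rpow_of_nonpos hr hpos (.of_forall fun t => norm_nonneg (y t)) hy.norm_norm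
  refine IsBigO.trans (.of_bound (M * |h (y 0) (η 0)|) ?_) hyr
  filter_upwards [(tendsto_cobounded_of_isBigO hl hy).eventually hgrad] with t ht
  calc ‖deriv η t‖ = ‖gradient (fun x => h x (η t)) (y t)‖ := by rw [(hsol t).2.deriv, norm_neg]
    _ ≤ M * ‖y t‖ ^ r * |h (y t) (η t)| := ht (η t)
    _ = M * |h (y 0) (η 0)| * ‖y t‖ ^ r := by rw [hsol.hamiltonian_eq hh t 0]; ring
    _ = M * |h (y 0) (η 0)| * ‖‖y t‖ ^ r‖ := by
      rw [Real.norm_of_nonneg (Real.rpow_nonneg (norm_nonneg _) _)]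

end Hamiltonian

section KineticEnergy

theorem norm_sum_sum_mul_smul_le {ι F : Type*} [Fintype ι] [SeminormedAddCommGroup F]
    [NormedSpace ℝ F] (A : ι → ι → F) (ξ : EuclideanSpace ℝ ι) :
    ‖∑ m, ∑ n, (ξ m * ξ n) • A m n‖ ≤ (∑ m, ∑ n, ‖A m n‖) * ‖ξ‖ ^ 2 := by
  simp only [Finset.sum_mul]
  refine norm_sum_le_of_le _ fun m _ => norm_sum_le_of_le _ fun n _ => ?_
  have hm : ‖ξ m‖ ≤ ‖ξ‖ := PiLp.norm_apply_le ξ m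
  have hn : ‖ξ n‖ ≤ ‖ξ‖ := PiLp.norm_apply_le ξ n
  rw [norm_smul, norm_mul, mul_comm, sq]
  gcongr

variable {d : ℕ} {a : Fin d → Fin d → E d → ℝ}

theorem kk_eq_sum_smul (a : Fin d → Fin d → E d → ℝ) (x ξ : E d) :
    kk a x ξ = (1 / 2) * ∑ m, ∑ n, (ξ m * ξ n) • a m n x := by
  simp only [kk, smul_eq_mul, mul_assoc, mul_comm (a _ _ x)]

theorem differentiable_uncurry_kk (ha : ∀ m n, Differentiable ℝ (a m n)) :
    Differentiable ℝ (Function.uncurry (kk a)) := by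
  have : ∀ m n, Differentiable ℝ fun p : E d × E d => a m n p.1 :=
    fun m n => (ha m n).comp differentiable_fst
  unfold Function.uncurry kk
  fun_prop

theorem norm_gradient_kk_le {x : E d} (ha : ∀ m n, DifferentiableAt ℝ (a m n) x) (ξ : E d) :
    ‖gradient (fun x => kk a x ξ) x‖ ≤ 1 / 2 * (∑ m, ∑ n, ‖fderiv ℝ (a m n) x‖) * ‖ξ‖ ^ 2 := by
  have hfderiv : HasFDerivAt (fun x => kk a x ξ)
      ((1 / 2 : ℝ) • ∑ m, ∑ n, (ξ m * ξ n) • fderiv ℝ (a m n) x) x := by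
    simp only [kk_eq_sum_smul]
    exact (HasFDerivAt.fun_sum fun m _ => HasFDerivAt.fun_sum fun n _ =>
      (ha m n).hasFDerivAt.const_smul (ξ m * ξ n)).const_mul _
  rw [gradient, LinearIsometryEquiv.norm_map, hfderiv.fderiv, norm_smul, mul_assoc,
    Real.norm_of_nonneg one_half_pos.le]
  exact mul_le_mul_of_nonneg_left (norm_sum_sum_mul_smul_le _ ξ) one_half_pos.le

theorem norm_sq_le_four_mul_kk {x : E d}
    (hx : ∑ m, ∑ n, ‖a m n x - if m = n then (1 : ℝ) else 0‖ ≤ 1 / 2) (ξ : E d) :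
    ‖ξ‖ ^ 2 ≤ 4 * kk a x ξ := by
  have hδ : ∑ m, ∑ n, (ξ m * ξ n) • (if m = n then (1 : ℝ) else 0) = ‖ξ‖ ^ 2 := by
    rw [EuclideanSpace.real_norm_sq_eq]
    simp [sq]
  have hdiff : ∑ m, ∑ n, (ξ m * ξ n) • (a m n x - if m = n then (1 : ℝ) else 0) =
      2 * kk a x ξ - ‖ξ‖ ^ 2 := by
    simp only [smul_sub, Finset.sum_sub_distrib, hδ, kk_eq_sum_smul]
    ring
  have hle : |2 * kk a x ξ - ‖ξ‖ ^ 2| ≤ 1 / 2 * ‖ξ‖ ^ 2 := by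
    rw [← hdiff, ← Real.norm_eq_abs]
    exact (norm_sum_sum_mul_smul_le _ ξ).trans (by gcongr)
  linarith [(abs_le.1 hle).1]

theorem exists_norm_gradient_kk_le_mul_abs_kk {g : E d → ℝ}
    (ha : ∀ m n, Differentiable ℝ (a m n))
    (hlim : ∀ m n, Tendsto (fun x => a m n x - if m = n then (1 : ℝ) else 0)
      (cobounded (E d)) (𝓝 0))
    (hderiv : ∀ m n, fderiv ℝ (a m n) =O[cobounded (E d)] g) :
    ∃ M, ∀ᶠ x in cobounded (E d), ∀ ξ,
      ‖gradient (fun x => kk a x ξ) x‖ ≤ M * ‖g x‖ * |kk a x ξ| := by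
  have hclose : ∀ᶠ x in cobounded (E d),
      ∑ m, ∑ n, ‖a m n x - if m = n then (1 : ℝ) else 0‖ ≤ 1 / 2 := by
    have hsum : Tendsto (fun x => ∑ m, ∑ n, ‖a m n x - if m = n then (1 : ℝ) else 0‖)
        (cobounded (E d)) (𝓝 (∑ _m : Fin d, ∑ _n : Fin d, 0)) :=
      tendsto_finsetSum _ fun m _ => tendsto_finsetSum _ fun n _ =>
        tendsto_zero_iff_norm_tendsto_zero.1 (hlim m n)
    simp only [Finset.sum_const_zero] at hsum
    exact hsum.eventually_le_const one_half_pos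
  have hfderiv : (fun x => ∑ m, ∑ n, ‖fderiv ℝ (a m n) x‖) =O[cobounded (E d)] g :=
    .fun_sum fun m _ => .fun_sum fun n _ => (hderiv m n).norm_left
  obtain ⟨K, hK0, hK⟩ := hfderiv.exists_nonneg
  refine ⟨2 * K, ?_⟩
  filter_upwards [hclose, hK.bound] with x hx hKx ξ
  have hell : ‖ξ‖ ^ 2 ≤ 4 * |kk a x ξ| :=
    (norm_sq_le_four_mul_kk hx ξ).trans (by gcongr; exact le_abs_self _)
  calc ‖gradient (fun x => kk a x ξ) x‖
      ≤ 1 / 2 * (∑ m, ∑ n, ‖fderiv ℝ (a m n) x‖) * ‖ξ‖ ^ 2 :=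
        norm_gradient_kk_le (fun m n => ha m n x) ξ
    _ ≤ 1 / 2 * (K * ‖g x‖) * (4 * |kk a x ξ|) := by
        gcongr
        exact (Real.le_norm_self _).trans hKx
    _ = 2 * K * ‖g x‖ * |kk a x ξ| := by ring

end KineticEnergy

section SymbolDecay

variable {d : ℕ} {μ : ℝ} {a : Fin d → Fin d → E d → ℝ} {V : E d → ℝ}

theorem norm_le_jap (x : E d) : ‖x‖ ≤ jap x :=
  Real.le_sqrt_of_sq_le (by linarith)

theorem jap_rpow_isBigO {r : ℝ} (hr : r ≤ 0) :
    (fun x : E d => jap x ^ r) =O[cobounded (E d)] fun x => ‖x‖ ^ r :=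
  isBigO_rpow_rpow_of_nonpos hr (tendsto_norm_cobounded_atTop.eventually_gt_atTop 0)
    (.of_forall fun _ => Real.sqrt_nonneg _)
    (.of_norm_le fun x => by simpa only [norm_norm] using norm_le_jap x)

namespace AssumptionA

theorem differentiable (hA : AssumptionA μ a V) (m n : Fin d) : Differentiable ℝ (a m n) :=
  (hA.1 m n).differentiable (by simp)

theorem iteratedFDeriv_isBigO (hA : AssumptionA μ a V) (hμ : 0 ≤ μ) (m n : Fin d) (j : ℕ) :
    iteratedFDeriv ℝ j (fun z => a m n z - if m = n then (1 : ℝ) else 0)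
      =O[cobounded (E d)] fun x => ‖x‖ ^ (-μ - j) := by
  obtain ⟨K, hK0, hK⟩ := hA.2.2.2.2.1 m n j
  have hr : -μ - (j : ℝ) ≤ 0 := by linarith [j.cast_nonneg (α := ℝ)]
  refine IsBigO.trans (.of_bound K (.of_forall fun x => ?_)) (jap_rpow_isBigO hr)
  exact (hK x).trans (mul_le_mul_of_nonneg_left (Real.le_norm_self _) hK0.le)

theorem tendsto_sub_delta (hA : AssumptionA μ a V) (hμ : 0 < μ) (m n : Fin d) :
    Tendsto (fun x => a m n x - if m = n then (1 : ℝ) else 0) (cobounded (E d)) (𝓝 0) := by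
  have hO : (fun x => a m n x - if m = n then (1 : ℝ) else 0)
      =O[cobounded (E d)] fun x => ‖x‖ ^ (-μ) := by
    refine IsBigO.of_norm_left ?_
    simpa using (hA.iteratedFDeriv_isBigO hμ.le m n 0).norm_left
  exact hO.trans_tendsto ((tendsto_rpow_neg_atTop hμ).comp tendsto_norm_cobounded_atTop)

theorem fderiv_isBigO (hA : AssumptionA μ a V) (hμ : 0 ≤ μ) (m n : Fin d) :
    fderiv ℝ (a m n) =O[cobounded (E d)] fun x => ‖x‖ ^ (-μ - 1) := by
  refine IsBigO.of_norm_left ?_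
  simpa [norm_iteratedFDeriv_one, fderiv_sub_const] using
    (hA.iteratedFDeriv_isBigO hμ m n 1).norm_left

theorem exists_norm_gradient_kk_le (hA : AssumptionA μ a V) (hμ : 0 < μ) :
    ∃ M, ∀ᶠ x in cobounded (E d), ∀ ξ,
      ‖gradient (fun x => kk a x ξ) x‖ ≤ M * ‖x‖ ^ (-μ - 1) * |kk a x ξ| := by
  simpa only [Real.norm_of_nonneg (Real.rpow_nonneg (norm_nonneg _) _)] using
    exists_norm_gradient_kk_le_mul_abs_kk hA.differentiable (hA.tendsto_sub_delta hμ)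
      (hA.fderiv_isBigO hμ.le)

end AssumptionA

end SymbolDecay

theorem stmt0_general {d : ℕ} {h : E d → E d → ℝ} {y η : ℝ → E d} {μ M : ℝ} (hμ : 0 < μ)
    (hh : Differentiable ℝ (Function.uncurry h))
    (hgrad : ∀ᶠ x in cobounded (E d), ∀ ξ,
      ‖gradient (fun x => h x ξ) x‖ ≤ M * ‖x‖ ^ (-μ - 1) * |h x ξ|)
    (hsol : IsHamiltonSol h y η) (hy : (fun t => t) =O[cobounded ℝ] y) :
    (∃ ξp : E d, Tendsto η atTop (𝓝 ξp)) ∧ (∃ ξm : E d, Tendsto η atBot (𝓝 ξm)) := by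
  have hη : ∀ t, DifferentiableAt ℝ η t := fun t => (hsol t).2.differentiableAt
  have hO : deriv η =O[atBot ⊔ atTop] fun t => ‖t‖ ^ (-μ - 1) := by
    rw [← IsOrderBornology.cobounded_eq]
    exact hsol.deriv_momentum_isBigO hh (by linarith) hgrad le_rfl hy
  exact ⟨exists_tendsto_atTop_of_deriv_isBigO_rpow (.of_forall hη) (by linarith)
      (hO.mono le_sup_right),
    exists_tendsto_atBot_of_deriv_isBigO_rpow (.of_forall hη) (by linarith)
      (hO.mono le_sup_left)⟩

end AsymptoticMomenta

/-- Proposition 1 (existence of asymptotic momenta). -/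
theorem stmt0 (d : ℕ) (hd : 1 ≤ d) (μ : ℝ) (hμ : 1 / 2 < μ) (hμ1 : μ ≤ 1)
    (a : Fin d → Fin d → E d → ℝ) (V : E d → ℝ) (hA : AssumptionA μ a V)
    (y η : ℝ → E d) (ξ0 : E d) (hξ0 : ξ0 ≠ 0) (hη0 : η 0 = ξ0)
    (hHam : IsHamiltonSol (kk a) y η)
    (c C : ℝ) (hc : 0 < c) (hC : 0 < C) (hnt : ∀ t : ℝ, c * |t| - C ≤ ‖y t‖) :
    (∃ ξp : E d, Tendsto η atTop (𝓝 ξp)) ∧ (∃ ξm : E d, Tendsto η atBot (𝓝 ξm)) := by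
  obtain ⟨M, hM⟩ := hA.exists_norm_gradient_kk_le (by linarith)
  exact stmt0_general (by linarith) (differentiable_uncurry_kk hA.differentiable) hM hHam
    (isBigO_cobounded_of_mul_norm_sub_le hc hnt)
end
end

section
/- (Proposition 1, existence of asymptotic positions) Assume Assumption A(μ) with 1/2 < μ ≤ 1. Let (y,η) : ℝ → ℝ^d × ℝ^d solve the Hamilton equations for k with η(0) = ξ₀ ≠ 0, and suppose there exist c, C > 0 such that |y(t)| ≥ c|t| − C for all t ∈ ℝ. Then the limits x₊ = lim_{t→+∞} ( y(t) − ∇_ξΨ(t, η(t)) ) and x₋ = lim_{t→−∞} ( y(t) − ∇_ξΨ(t, η(t)) ) exist in ℝ^d. -/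
open Filter MeasureTheory
open scoped Topology BigOperators

noncomputable section

/-- `Ψ(t,ξ) = ∫₀ᵗ k(sξ, ξ) ds`. -/
def Psi {d : ℕ} (a : Fin d → Fin d → E d → ℝ) (t : ℝ) (ξ : E d) : ℝ :=
  ∫ s in (0 : ℝ)..t, kk a (s • ξ) ξ

/-!
Write `B = a - δ` and `G(t; x, ξ)` for the part of `∇_ξ k(tξ, ξ)` that is due to `B`, with the
position `x` and the momentum `ξ` separated. Then `∇Ψ(t, ξ) = tξ + ∫₀ᵗ G(s; ξ, ξ) ds`, and the
Hamilton equations give `(y - tη)' = G(t; y/t, η)` with the same `G`.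

Conservation of energy bounds `η`, so the force is `O(t^{-μ-1})` along an escaping trajectory; hence
`η` has a limit `p ≠ 0`, and both `η - p` and `y/t - p` are `O(t^{-μ})`. Near `(p, p)` the map
`G(t; ·, ·)` is Lipschitz with constant `O(t^{-μ})`. Freezing its argument at `(p, p)` therefore
costs `O(t^{-2μ})` in the derivative of `y - tη` and `O(t^{1-μ}) · O(t^{-μ})` in the integral, and
`2μ > 1` makes the difference `y - ∇Ψ(t, η)` converge. If `μ ≥ 1`, some rate in `(1/2, 1)` is used
instead, so that no logarithm appears. The limit at `-∞` follows from the symmetry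
`(y(t), η(t)) ↦ (y(-t), -η(-t))`.
-/

open Asymptotics InnerProductSpace Metric

section DerivativeBounds

variable {G : Type*} [NormedAddCommGroup G] [NormedSpace ℝ G] {f f' : ℝ → G}

theorem norm_sub_le_rpow_sub_rpow_of_hasDerivAt {T K p s t : ℝ} (hT : 0 < T) (hp : p ≠ 0)
    (hf : ∀ t, T ≤ t → HasDerivAt f (f' t) t)
    (hf' : ∀ t, T ≤ t → ‖f' t‖ ≤ K * t ^ (p - 1)) (hs : T ≤ s) (hst : s ≤ t) :
    ‖f t - f s‖ ≤ K / p * (t ^ p - s ^ p) := by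
  have hB : ∀ x, 0 < x →
      HasDerivAt (fun x : ℝ => K / p * (x ^ p - s ^ p)) (K * x ^ (p - 1)) x := fun x hx =>
    (((Real.hasDerivAt_rpow_const (p := p) (Or.inl hx.ne')).sub_const (s ^ p)).const_mul
      (K / p)).congr_deriv (by rw [← mul_assoc, div_mul_cancel₀ _ hp])
  have hfs : ∀ x, T ≤ x → HasDerivAt (fun x => f x - f s) (f' x) x := fun x hx =>
    (hf x hx).sub_const _
  exact image_norm_le_of_norm_deriv_right_le_deriv_boundary'
    (fun x hx => (hfs x (hs.trans hx.1)).continuousAt.continuousWithinAt)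
    (fun x hx => (hfs x (hs.trans hx.1)).hasDerivWithinAt)
    (by simp)
    (fun x hx => (hB x (hT.trans_le (hs.trans hx.1))).continuousAt.continuousWithinAt)
    (fun x hx => (hB x (hT.trans_le (hs.trans hx.1))).hasDerivWithinAt)
    (fun x hx => hf' x (hs.trans hx.1)) ⟨hst, le_rfl⟩

theorem exists_norm_deriv_le_rpow {p : ℝ} (hf : ∀ᶠ t in atTop, HasDerivAt f (f' t) t)
    (hf' : f' =O[atTop] fun t => t ^ p) :
    ∃ T > 0, ∃ K > 0, ∀ t, T ≤ t → HasDerivAt f (f' t) t ∧ ‖f' t‖ ≤ K * t ^ p := by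
  obtain ⟨K, hK, hKf⟩ := hf'.exists_pos
  obtain ⟨T, hT⟩ := eventually_atTop.1 (hf.and hKf.bound)
  refine ⟨max T 1, by positivity, K, hK, fun t ht => ?_⟩
  have ht0 : 0 ≤ t := by linarith [le_max_right T 1]
  obtain ⟨hd, hb⟩ := hT t (le_of_max_le_left ht)
  exact ⟨hd, by rwa [Real.norm_of_nonneg (Real.rpow_nonneg ht0 p)] at hb⟩

theorem isBigO_rpow_of_hasDerivAt {p : ℝ} (hp : 0 < p)
    (hf : ∀ᶠ t in atTop, HasDerivAt f (f' t) t) (hf' : f' =O[atTop] fun t => t ^ (p - 1)) :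
    f =O[atTop] fun t => t ^ p := by
  obtain ⟨T, hT, K, hK, h⟩ := exists_norm_deriv_le_rpow hf hf'
  have hincr : (fun t => f t - f T) =O[atTop] fun t => t ^ p := by
    refine IsBigO.of_bound (K / p) ?_
    filter_upwards [eventually_ge_atTop T] with t ht
    have ht0 : 0 ≤ t := hT.le.trans ht
    rw [Real.norm_of_nonneg (Real.rpow_nonneg ht0 p)]
    refine (norm_sub_le_rpow_sub_rpow_of_hasDerivAt hT hp.ne' (fun t ht => (h t ht).1)
      (fun t ht => (h t ht).2) le_rfl ht).trans ?_
    gcongr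
    exact sub_le_self _ (Real.rpow_nonneg hT.le p)
  have hconst : (fun _ => f T) =O[atTop] fun t : ℝ => t ^ p :=
    (isLittleO_const_left.2
      (Or.inr (tendsto_norm_atTop_atTop.comp (tendsto_rpow_atTop hp)))).isBigO
  exact (hincr.add hconst).congr_left fun t => sub_add_cancel _ _

theorem exists_sub_isBigO_rpow_of_hasDerivAt [CompleteSpace G] {ν : ℝ} (hν : 0 < ν)
    (hf : ∀ᶠ t in atTop, HasDerivAt f (f' t) t) (hf' : f' =O[atTop] fun t => t ^ (-ν - 1)) :
    ∃ L, (fun t => f t - L) =O[atTop] fun t => t ^ (-ν) := by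
  obtain ⟨T, hT, K, hK, h⟩ := exists_norm_deriv_le_rpow hf hf'
  have hincr : ∀ s t, T ≤ s → s ≤ t → ‖f t - f s‖ ≤ K / ν * s ^ (-ν) := by
    intro s t hs hst
    have ht0 : 0 ≤ t := by linarith
    refine (norm_sub_le_rpow_sub_rpow_of_hasDerivAt hT (neg_ne_zero.2 hν.ne')
      (fun t ht => (h t ht).1) (fun t ht => (h t ht).2) hs hst).trans ?_
    rw [div_neg, neg_mul_comm, neg_sub]
    gcongr
    exact sub_le_self _ (Real.rpow_nonneg ht0 _)
  have hlim : Tendsto (fun s : ℝ => K / ν * s ^ (-ν)) atTop (𝓝 0) := by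
    simpa using (tendsto_rpow_neg_atTop hν).const_mul (K / ν)
  have hcauchy : CauchySeq f := by
    rw [Metric.cauchySeq_iff']
    intro δ hδ
    obtain ⟨N, hN, hTN⟩ := ((hlim.eventually (gt_mem_nhds hδ)).and (eventually_ge_atTop T)).exists
    exact ⟨N, fun n hn => dist_eq_norm (f n) (f N) ▸ (hincr N n hTN hn).trans_lt hN⟩
  obtain ⟨L, hL⟩ := cauchySeq_tendsto_of_complete hcauchy
  refine ⟨L, IsBigO.of_bound (K / ν) ?_⟩
  filter_upwards [eventually_ge_atTop T] with t ht
  rw [Real.norm_of_nonneg (Real.rpow_nonneg (hT.le.trans ht) _), norm_sub_rev]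
  refine le_of_tendsto (hL.sub_const (f t)).norm ?_
  filter_upwards [eventually_ge_atTop t] with u hu using hincr t u ht hu

end DerivativeBounds

section ParametricIntegral

variable {G F : Type*} [NormedAddCommGroup G] [NormedSpace ℝ G] [NormedAddCommGroup F]
  [NormedSpace ℝ F]

theorem hasFDerivAt_intervalIntegral_of_continuous {f : G → ℝ → F} {f' : G → ℝ → G →L[ℝ] F}
    (hf : ∀ x, Continuous (f x)) (hf' : Continuous fun q : G × ℝ => f' q.1 q.2)
    (hderiv : ∀ x s, HasFDerivAt (fun x => f x s) (f' x s) x) (a b : ℝ) (x₀ : G) :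
    HasFDerivAt (fun x => ∫ s in a..b, f x s) (∫ s in a..b, f' x₀ s) x₀ := by
  have hf'₀ : Continuous (f' x₀) := hf'.comp (.prodMk_right x₀)
  obtain ⟨K, hK⟩ := isCompact_uIcc.exists_bound_of_continuousOn (s := Set.uIcc a b)
    hf'₀.continuousOn
  have hbound : ∀ᶠ x in 𝓝 x₀, ∀ s ∈ Set.uIcc a b, ‖f' x s‖ ≤ K + 1 :=
    isCompact_uIcc.eventually_forall_of_forall_eventually fun s hs =>
      (hf'.norm.tendsto (x₀, s)).eventually_le_const ((hK s hs).trans_lt (lt_add_one K))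
  exact intervalIntegral.hasFDerivAt_integral_of_dominated_of_fderiv_le (𝕜 := ℝ) hbound
    (Eventually.of_forall fun x => (hf x).aestronglyMeasurable)
    ((hf x₀).intervalIntegrable _ _) hf'₀.aestronglyMeasurable
    (Eventually.of_forall fun s hs x hx => hx s (Set.uIoc_subset_uIcc hs))
    intervalIntegrable_const (Eventually.of_forall fun s _ x _ => hderiv x s)

end ParametricIntegral

section Symbol

variable {H F F' : Type*} [NormedAddCommGroup H] [NormedSpace ℝ H] [NormedAddCommGroup F]
  [NormedSpace ℝ F] [NormedAddCommGroup F'] [NormedSpace ℝ F']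

/-- The symbol class `S^{-μ}` with finitely many derivatives: `f` is of class `C^n` and
`∂^j f(x) = O(⟨x⟩^{-μ-j})` for `j ≤ n`. Note the sign: `μ` is the rate of decay. -/
structure IsSymbol (n : ℕ) (μ : ℝ) (f : H → F) : Prop where
  contDiff : ContDiff ℝ n f
  bound : ∀ j ≤ n, ∃ C, ∀ x, ‖iteratedFDeriv ℝ j f x‖ ≤ C * √(1 + ‖x‖ ^ 2) ^ (-μ - (j : ℝ))

namespace IsSymbol

variable {n : ℕ} {μ ν : ℝ} {f : H → F}

theorem mono_decay (hf : IsSymbol n μ f) (hν : ν ≤ μ) : IsSymbol n ν f where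
  contDiff := hf.contDiff
  bound j hj := by
    obtain ⟨C, hC⟩ := hf.bound j hj
    refine ⟨|C|, fun x => (hC x).trans ?_⟩
    have hx : 1 ≤ √(1 + ‖x‖ ^ 2) := Real.one_le_sqrt.2 (by simp)
    gcongr
    exact le_abs_self C

theorem mono_order {m : ℕ} (hf : IsSymbol n μ f) (hm : m ≤ n) : IsSymbol m μ f where
  contDiff := hf.contDiff.of_le (by exact_mod_cast hm)
  bound j hj := hf.bound j (hj.trans hm)

protected theorem fderiv (hf : IsSymbol (n + 1) μ f) : IsSymbol n (μ + 1) (fderiv ℝ f) where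
  contDiff := hf.contDiff.fderiv_right (by norm_cast)
  bound j hj := by
    obtain ⟨C, hC⟩ := hf.bound (j + 1) (by lia)
    refine ⟨C, fun x => ?_⟩
    have hexp : -(μ + 1) - (j : ℝ) = -μ - ((j + 1 : ℕ) : ℝ) := by
      push_cast
      ring
    rw [norm_iteratedFDeriv_fderiv, hexp]
    exact hC x

theorem clm_comp (L : F →L[ℝ] F') (hf : IsSymbol n μ f) : IsSymbol n μ (fun x => L (f x)) where
  contDiff := L.contDiff.comp hf.contDiff
  bound j hj := by
    obtain ⟨C, hC⟩ := hf.bound j hj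
    refine ⟨‖L‖ * C, fun x => ?_⟩
    rw [mul_assoc]
    exact (L.norm_iteratedFDeriv_comp_left hf.contDiff.contDiffAt (by exact_mod_cast hj)).trans
      (by gcongr; exact hC x)

theorem sum {ι : Type*} {s : Finset ι} {f : ι → H → F} (hf : ∀ i ∈ s, IsSymbol n μ (f i)) :
    IsSymbol n μ (fun x => ∑ i ∈ s, f i x) where
  contDiff := ContDiff.sum fun i hi => (hf i hi).contDiff
  bound j hj := by
    choose! C hC using fun i hi => (hf i hi).bound j hj
    refine ⟨∑ i ∈ s, C i, fun x => ?_⟩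
    rw [iteratedFDeriv_fun_sum_apply fun i hi =>
      ((hf i hi).contDiff.of_le (by exact_mod_cast hj)).contDiffAt, Finset.sum_mul]
    exact norm_sum_le_of_le _ fun i hi => hC i hi x

theorem exists_norm_le_rpow (hf : IsSymbol n μ f) (hμ : 0 ≤ μ) :
    ∃ C ≥ 0, ∀ x r, 0 < r → r ≤ ‖x‖ → ‖f x‖ ≤ C * r ^ (-μ) := by
  obtain ⟨C, hC⟩ := hf.bound 0 n.zero_le
  refine ⟨|C|, abs_nonneg C, fun x r hr hrx => ?_⟩
  have hbracket : r ≤ √(1 + ‖x‖ ^ 2) := Real.le_sqrt_of_sq_le (by nlinarith)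
  calc ‖f x‖ ≤ C * √(1 + ‖x‖ ^ 2) ^ (-μ) := by simpa using hC x
    _ ≤ |C| * r ^ (-μ) := mul_le_mul (le_abs_self C)
        (Real.rpow_le_rpow_of_nonpos hr hbracket (by linarith)) (by positivity) (abs_nonneg C)

theorem isBigO_comp (hf : IsSymbol n μ f) (hμ : 0 ≤ μ) {y : ℝ → H} {c : ℝ} (hc : 0 < c)
    (hy : ∀ᶠ t in atTop, c * t ≤ ‖y t‖) : (fun t => f (y t)) =O[atTop] fun t => t ^ (-μ) := by
  obtain ⟨C, -, hC⟩ := hf.exists_norm_le_rpow hμ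
  refine IsBigO.of_bound (C * c ^ (-μ)) ?_
  filter_upwards [hy, eventually_gt_atTop 0] with t hyt ht
  rw [Real.norm_of_nonneg (by positivity), mul_assoc, ← Real.mul_rpow hc.le ht.le]
  exact hC _ _ (by positivity) hyt

theorem tendsto_comp_zero (hf : IsSymbol n μ f) (hμ : 0 < μ) {y : ℝ → H} {c : ℝ} (hc : 0 < c)
    (hy : ∀ᶠ t in atTop, c * t ≤ ‖y t‖) : Tendsto (fun t => f (y t)) atTop (𝓝 0) :=
  (hf.isBigO_comp hμ.le hc hy).trans_tendsto (tendsto_rpow_neg_atTop hμ)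

theorem exists_norm_smul_le (hf : IsSymbol n μ f) (hμ : 0 ≤ μ) {p : H} (hp : p ≠ 0) :
    ∃ C ≥ 0, ∀ t, 0 < t → ∀ z ∈ closedBall p (‖p‖ / 2), ‖f (t • z)‖ ≤ C * t ^ (-μ) := by
  obtain ⟨C, hC, hf⟩ := hf.exists_norm_le_rpow hμ
  refine ⟨C * (‖p‖ / 2) ^ (-μ), by positivity, fun t ht z hz => ?_⟩
  have hnorm : ‖p‖ / 2 ≤ ‖z‖ := by
    rw [mem_closedBall', dist_eq_norm] at hz
    linarith [norm_sub_norm_le p z]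
  have hscale : ‖p‖ / 2 * t ≤ ‖t • z‖ := by
    rw [norm_smul, Real.norm_of_nonneg ht.le, mul_comm]
    gcongr
  rw [mul_assoc, ← Real.mul_rpow (by positivity) ht.le]
  exact hf _ _ (by positivity) hscale

end IsSymbol

end Symbol

section LipschitzDecay

variable {X G G₁ G₂ : Type*} [NormedAddCommGroup X] [NormedAddCommGroup G]
  [NormedAddCommGroup G₁] [NormedSpace ℝ G₁] [NormedAddCommGroup G₂] [NormedSpace ℝ G₂]

/-- A time-dependent map `φ` is, on `U` and uniformly in `t > 0`, bounded and Lipschitz with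
constants `O(t^{-ν})`. A symbol of order `-ν` has this property in the rescaled position `x / t`,
away from the origin. -/
def LipschitzDecayOn (U : Set X) (ν : ℝ) (φ : ℝ → X → G) : Prop :=
  ∃ K, ∀ t, 0 < t → (∀ z ∈ U, ‖φ t z‖ ≤ K * t ^ (-ν)) ∧
    ∀ z ∈ U, ∀ w ∈ U, ‖φ t z - φ t w‖ ≤ K * t ^ (-ν) * ‖z - w‖

namespace LipschitzDecayOn

variable {U : Set X} {ν ν' : ℝ}

theorem add {φ ψ : ℝ → X → G} (hφ : LipschitzDecayOn U ν φ) (hψ : LipschitzDecayOn U ν ψ) :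
    LipschitzDecayOn U ν fun t z => φ t z + ψ t z := by
  obtain ⟨K, hK⟩ := hφ
  obtain ⟨K', hK'⟩ := hψ
  refine ⟨K + K', fun t ht => ⟨fun z hz => ?_, fun z hz w hw => ?_⟩⟩
  · rw [add_mul]
    exact norm_add_le_of_le ((hK t ht).1 z hz) ((hK' t ht).1 z hz)
  · rw [add_sub_add_comm, add_mul, add_mul]
    exact norm_add_le_of_le ((hK t ht).2 z hz w hw) ((hK' t ht).2 z hz w hw)

theorem clm_comp (L : G₁ →L[ℝ] G₂) {φ : ℝ → X → G₁} (hφ : LipschitzDecayOn U ν φ) :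
    LipschitzDecayOn U ν fun t z => L (φ t z) := by
  obtain ⟨K, hK⟩ := hφ
  refine ⟨‖L‖ * K, fun t ht => ⟨fun z hz => ?_, fun z hz w hw => ?_⟩⟩
  · exact mul_assoc ‖L‖ K _ ▸ L.le_opNorm_of_le ((hK t ht).1 z hz)
  · rw [← map_sub, mul_assoc, mul_assoc, ← mul_assoc K]
    exact L.le_opNorm_of_le ((hK t ht).2 z hz w hw)

theorem const_smul (c : ℝ) {φ : ℝ → X → G₁} (hφ : LipschitzDecayOn U ν φ) :
    LipschitzDecayOn U ν fun t z => c • φ t z :=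
  hφ.clm_comp (c • .id ℝ G₁)

set_option maxSynthPendingDepth 3 in
theorem clm_flip {G₃ : Type*} [NormedAddCommGroup G₃] [NormedSpace ℝ G₃]
    {φ : ℝ → X → G₁ →L[ℝ] G₂ →L[ℝ] G₃} (hφ : LipschitzDecayOn U ν φ) :
    LipschitzDecayOn U ν fun t z => (φ t z).flip :=
  hφ.clm_comp
    (ContinuousLinearMap.flipₗᵢ ℝ G₁ G₂ G₃).toContinuousLinearEquiv.toContinuousLinearMap

theorem comp_fst {Y : Type*} [NormedAddCommGroup Y] {φ : ℝ → X → G}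
    (hφ : LipschitzDecayOn U ν φ) {W : Set (X × Y)} (hW : Set.MapsTo Prod.fst W U) :
    LipschitzDecayOn W ν fun t z => φ t z.1 := by
  obtain ⟨K, hK⟩ := hφ
  refine ⟨max K 0, fun t ht => ⟨fun z hz => ?_, fun z hz w hw => ?_⟩⟩
  · refine ((hK t ht).1 _ (hW hz)).trans ?_
    gcongr
    exact le_max_left K 0
  · refine ((hK t ht).2 _ (hW hz) _ (hW hw)).trans ?_
    gcongr
    · exact le_max_left K 0
    · exact norm_fst_le (z - w)

theorem clm_apply {φ : ℝ → X → G₁ →L[ℝ] G₂} {ψ : ℝ → X → G₁} (hφ : LipschitzDecayOn U ν φ)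
    (hψ : LipschitzDecayOn U ν' ψ) : LipschitzDecayOn U (ν + ν') fun t z => φ t z (ψ t z) := by
  obtain ⟨K, hK⟩ := hφ
  obtain ⟨K', hK'⟩ := hψ
  refine ⟨2 * (K * K'), fun t ht => ?_⟩
  have hrpow : t ^ (-(ν + ν')) = t ^ (-ν) * t ^ (-ν') := by rw [← Real.rpow_add ht, neg_add]
  obtain ⟨hφb, hφl⟩ := hK t ht
  obtain ⟨hψb, hψl⟩ := hK' t ht
  have happly : ∀ z ∈ U, ‖φ t z (ψ t z)‖ ≤ K * K' * t ^ (-(ν + ν')) := fun z hz =>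
    ((φ t z).le_of_opNorm_le_of_le (hφb z hz) (hψb z hz)).trans_eq (by rw [hrpow]; ring)
  refine ⟨fun z hz => ?_, fun z hz w hw => ?_⟩
  · linarith [happly z hz, norm_nonneg (φ t z (ψ t z))]
  · rw [show φ t z (ψ t z) - φ t w (ψ t w) = (φ t z - φ t w) (ψ t z) + φ t w (ψ t z - ψ t w) by
      simp]
    refine (norm_add_le_of_le
      ((φ t z - φ t w).le_of_opNorm_le_of_le (hφl z hz w hw) (hψb z hz))
      ((φ t w).le_of_opNorm_le_of_le (hφb w hw) (hψl z hz w hw))).trans_eq ?_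
    rw [hrpow]
    ring

theorem time_smul [NormedSpace ℝ G] {φ : ℝ → X → G} (hφ : LipschitzDecayOn U (ν + 1) φ) :
    LipschitzDecayOn U ν fun t z => t • φ t z := by
  obtain ⟨K, hK⟩ := hφ
  refine ⟨K, fun t ht => ?_⟩
  have hrpow : t ^ (-ν) = t * t ^ (-(ν + 1)) := by
    rw [mul_comm, ← Real.rpow_add_one ht.ne', neg_add, neg_add_cancel_right]
  refine ⟨fun z hz => ?_, fun z hz w hw => ?_⟩
  · rw [norm_smul, Real.norm_of_nonneg ht.le, hrpow, mul_left_comm]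
    gcongr
    exact (hK t ht).1 z hz
  · rw [← smul_sub, norm_smul, Real.norm_of_nonneg ht.le, hrpow, mul_left_comm K, mul_assoc t]
    gcongr
    exact (hK t ht).2 z hz w hw

theorem of_clm [NormedSpace ℝ X] [NormedSpace ℝ G] (L : X →L[ℝ] G) (hU : Bornology.IsBounded U) :
    LipschitzDecayOn U 0 fun _ z => L z := by
  obtain ⟨R, hR⟩ := hU.exists_norm_le
  refine ⟨‖L‖ * max R 1, fun t _ => ?_⟩
  rw [neg_zero, Real.rpow_zero, mul_one]
  refine ⟨fun z hz => L.le_opNorm_of_le ((hR z hz).trans (le_max_left R 1)),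
    fun z _ w _ => ?_⟩
  rw [← map_sub, mul_right_comm]
  exact (L.le_opNorm _).trans
    (le_mul_of_one_le_right (by positivity) (le_max_right R 1))

theorem exists_norm_integral_sub_le [NormedSpace ℝ G] {φ : ℝ → X → G}
    (hφ : LipschitzDecayOn U ν φ) (hν : ν < 1) :
    ∃ K, ∀ t, 0 < t → ∀ z ∈ U, ∀ w ∈ U,
      ‖∫ s in (0 : ℝ)..t, (φ s z - φ s w)‖ ≤ K * t ^ (1 - ν) * ‖z - w‖ := by
  obtain ⟨K, hK⟩ := hφ
  refine ⟨K / (1 - ν), fun t ht z hz w hw => ?_⟩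
  have hint : IntervalIntegrable (fun s : ℝ => K * s ^ (-ν) * ‖z - w‖) volume 0 t :=
    ((intervalIntegral.intervalIntegrable_rpow' (by linarith)).const_mul K).mul_const _
  refine (intervalIntegral.norm_integral_le_of_norm_le ht.le
    (Eventually.of_forall fun s hs => (hK s hs.1).2 z hz w hw) hint).trans_eq ?_
  rw [intervalIntegral.integral_mul_const, intervalIntegral.integral_const_mul,
    integral_rpow (Or.inl (by linarith)), neg_add_eq_sub, Real.zero_rpow (by linarith), sub_zero]
  ring

theorem isBigO_sub {φ : ℝ → X → G} {q : X} (hφ : LipschitzDecayOn U ν φ) (hU : U ∈ 𝓝 q)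
    {z : ℝ → X} (hzq : Tendsto z atTop (𝓝 q))
    (hz : (fun t => z t - q) =O[atTop] fun t => t ^ (-ν')) :
    (fun t => φ t (z t) - φ t q) =O[atTop] fun t => t ^ (-ν) * t ^ (-ν') := by
  obtain ⟨K, hK⟩ := hφ
  refine (IsBigO.of_bound K ?_).trans
    ((isBigO_refl (fun t : ℝ => t ^ (-ν)) _).mul hz.norm_left)
  filter_upwards [hzq hU, eventually_gt_atTop 0] with t hzt ht
  rw [norm_mul, norm_norm, Real.norm_of_nonneg (Real.rpow_nonneg ht.le _), ← mul_assoc]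
  exact (hK t ht).2 _ hzt _ (mem_of_mem_nhds hU)

theorem isBigO_integral_sub [NormedSpace ℝ G] {φ : ℝ → X → G} {q : X}
    (hφ : LipschitzDecayOn U ν φ) (hν : ν < 1) (hU : U ∈ 𝓝 q) {z : ℝ → X}
    (hzq : Tendsto z atTop (𝓝 q)) (hz : (fun t => z t - q) =O[atTop] fun t => t ^ (-ν')) :
    (fun t => ∫ s in (0 : ℝ)..t, (φ s (z t) - φ s q)) =O[atTop]
      fun t => t ^ (1 - ν) * t ^ (-ν') := by
  obtain ⟨K, hK⟩ := hφ.exists_norm_integral_sub_le hν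
  refine (IsBigO.of_bound K ?_).trans
    ((isBigO_refl (fun t : ℝ => t ^ (1 - ν)) _).mul hz.norm_left)
  filter_upwards [hzq hU, eventually_gt_atTop 0] with t hzt ht
  rw [norm_mul, norm_norm, Real.norm_of_nonneg (Real.rpow_nonneg ht.le _), ← mul_assoc]
  exact hK t ht _ hzt _ (mem_of_mem_nhds hU)

theorem exists_tendsto_sub_integral [NormedSpace ℝ G] [CompleteSpace G] {φ : ℝ → X → G} {q : X}
    (hφ : LipschitzDecayOn U ν φ) (hU : U ∈ 𝓝 q) (hcont : ∀ z, Continuous fun t => φ t z)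
    (hν : 1 / 2 < ν) (hν1 : ν < 1) {u : ℝ → G} {z ζ : ℝ → X}
    (hu : ∀ᶠ t in atTop, HasDerivAt u (φ t (z t)) t)
    (hz : (fun t => z t - q) =O[atTop] fun t => t ^ (-ν))
    (hζ : (fun t => ζ t - q) =O[atTop] fun t => t ^ (-ν)) :
    ∃ L, Tendsto (fun t => u t - ∫ s in (0 : ℝ)..t, φ s (ζ t)) atTop (𝓝 L) := by
  have hto : ∀ {z : ℝ → X}, ((fun t => z t - q) =O[atTop] fun t => t ^ (-ν)) →
      Tendsto z atTop (𝓝 q) := fun h =>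
    tendsto_sub_nhds_zero_iff.1 (h.trans_tendsto (tendsto_rpow_neg_atTop (by linarith)))
  have hderiv : ∀ᶠ t in atTop, HasDerivAt (fun t => u t - ∫ s in (0 : ℝ)..t, φ s q)
      (φ t (z t) - φ t q) t := hu.mono fun t ht =>
    ht.sub ((hcont q).integral_hasStrictDerivAt 0 t).hasDerivAt
  have hO : (fun t => φ t (z t) - φ t q) =O[atTop] fun t => t ^ (-(2 * ν - 1) - 1) := by
    refine (hφ.isBigO_sub hU (hto hz) hz).congr' .rfl ?_
    filter_upwards [eventually_gt_atTop 0] with t ht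
    rw [← Real.rpow_add ht]
    congr 1
    ring
  obtain ⟨L, hL⟩ := exists_sub_isBigO_rpow_of_hasDerivAt (by linarith) hderiv hO
  have hfrozen : Tendsto (fun t => u t - ∫ s in (0 : ℝ)..t, φ s q) atTop (𝓝 L) :=
    tendsto_sub_nhds_zero_iff.1 (hL.trans_tendsto (tendsto_rpow_neg_atTop (by linarith)))
  have hdiff : Tendsto (fun t => ∫ s in (0 : ℝ)..t, (φ s (ζ t) - φ s q)) atTop (𝓝 0) := by
    refine ((hφ.isBigO_integral_sub hν1 hU (hto hζ) hζ).congr' .rfl ?_).trans_tendsto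
      (tendsto_rpow_neg_atTop (y := 2 * ν - 1) (by linarith))
    filter_upwards [eventually_gt_atTop 0] with t ht
    rw [← Real.rpow_add ht]
    congr 1
    ring
  refine ⟨L, (sub_zero L ▸ hfrozen.sub hdiff).congr fun t => ?_⟩
  rw [intervalIntegral.integral_sub ((hcont _).intervalIntegrable _ _)
    ((hcont _).intervalIntegrable _ _), sub_sub_sub_cancel_right]

end LipschitzDecayOn

end LipschitzDecay

theorem IsSymbol.lipschitzDecayOn {H F : Type*} [NormedAddCommGroup H] [NormedSpace ℝ H]
    [NormedAddCommGroup F] [NormedSpace ℝ F] {n : ℕ} {ν : ℝ} {f : H → F}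
    (hf : IsSymbol (n + 1) ν f) (hν : 0 ≤ ν) {p : H} (hp : p ≠ 0) :
    LipschitzDecayOn (closedBall p (‖p‖ / 2)) ν fun t z => f (t • z) := by
  obtain ⟨C₀, hC₀, h₀⟩ := hf.exists_norm_smul_le hν hp
  obtain ⟨C₁, hC₁, h₁⟩ := hf.fderiv.exists_norm_smul_le (by linarith) hp
  refine ⟨C₀ + C₁, fun t ht => ?_⟩
  have hderiv : ∀ z, HasFDerivAt (fun z => f (t • z)) (t • fderiv ℝ f (t • z)) z := fun z =>
    (((hf.contDiff.differentiable (by simp)) (t • z)).hasFDerivAt.comp z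
      ((hasFDerivAt_id z).const_smul t)).congr_fderiv (by ext; simp)
  have hderiv_le : ∀ z ∈ closedBall p (‖p‖ / 2),
      ‖t • fderiv ℝ f (t • z)‖ ≤ C₁ * t ^ (-ν) := fun z hz =>
    calc ‖t • fderiv ℝ f (t • z)‖ ≤ t * (C₁ * t ^ (-(ν + 1))) := by
          rw [norm_smul, Real.norm_of_nonneg ht.le]
          gcongr
          exact h₁ t ht z hz
      _ = C₁ * (t ^ (-(ν + 1)) * t) := by ring
      _ = C₁ * t ^ (-ν) := by
          rw [← Real.rpow_add_one ht.ne', neg_add, neg_add_cancel_right]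
  refine ⟨fun z hz => ?_, fun z hz w hw => ?_⟩
  · refine (h₀ t ht z hz).trans ?_
    gcongr
    exact le_add_of_nonneg_right hC₁
  · refine ((convex_closedBall p _).norm_image_sub_le_of_norm_hasFDerivWithin_le
      (fun z _ => (hderiv z).hasFDerivWithinAt) hderiv_le hw hz).trans ?_
    gcongr
    exact le_add_of_nonneg_left hC₀

section Riesz

variable {H : Type*} [NormedAddCommGroup H] [InnerProductSpace ℝ H] [CompleteSpace H]

/-- The Fréchet–Riesz isometry from the dual of a real Hilbert space to the space. It is
`(toDual ℝ H).symm`, which Mathlib types as conjugate-linear, made `ℝ`-linear. -/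
def riesz : (H →L[ℝ] ℝ) →ₗᵢ[ℝ] H where
  toFun f := (toDual ℝ H).symm f
  map_add' := map_add _
  map_smul' := map_smulₛₗ _
  norm_map' := LinearIsometryEquiv.norm_map _

@[simp]
theorem inner_riesz_left (f : H →L[ℝ] ℝ) (v : H) : inner ℝ (riesz f) v = f v :=
  toDual_symm_apply

@[simp]
theorem riesz_innerSL (ξ : H) : riesz (innerSL ℝ ξ) = ξ :=
  (toDual ℝ H).symm_apply_apply ξ

theorem gradient_eq_riesz {f : H → ℝ} {f' : H →L[ℝ] ℝ} {x : H} (hf : HasFDerivAt f f' x) :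
    gradient f x = riesz f' :=
  hf.hasGradientAt.gradient

theorem gradient_comp_neg (f : H → ℝ) (x : H) :
    gradient (fun x => f (-x)) x = -gradient f (-x) := by
  have hfderiv : fderiv ℝ (fun x => f (-x)) x = -fderiv ℝ f (-x) := by
    simpa using fderiv_comp_smul (f := f) (x := x) (-1 : ℝ)
  rw [gradient, hfderiv, map_neg, gradient]

theorem gradient_fun_neg (f : H → ℝ) (x : H) : gradient (fun x => -f x) x = -gradient f x := by
  rw [gradient, fderiv_fun_neg, map_neg, gradient]

end Riesz

section Hamilton

variable {H : Type*} [NormedAddCommGroup H] [InnerProductSpace ℝ H] {h : H → H → ℝ}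
  {y η : ℝ → H}

/-- `(y, η)` is an integral curve, defined for all times, of the Hamiltonian vector field of
`h = h(x, ξ)` on the phase space of a real Hilbert space. -/
structure IsHamiltonCurve [CompleteSpace H] (h : H → H → ℝ) (y η : ℝ → H) : Prop where
  hasDerivAt_position : ∀ t, HasDerivAt y (gradient (h (y t)) (η t)) t
  hasDerivAt_momentum : ∀ t, HasDerivAt η (-gradient (fun x => h x (η t)) (y t)) t

/-- The phase `Ψ(t, ξ) = ∫₀ᵗ h(sξ, ξ) ds`, an approximate solution of the Hamilton–Jacobi equation
`∂ₜΨ(t, ξ) = h(∇Ψ(t, ξ), ξ)`. -/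
def phase (h : H → H → ℝ) (t : ℝ) (ξ : H) : ℝ :=
  ∫ s in (0 : ℝ)..t, h (s • ξ) ξ

theorem phase_neg_time (heven : ∀ x ξ, h x (-ξ) = h x ξ) (t : ℝ) (ξ : H) :
    phase h (-t) ξ = -phase h t (-ξ) := by
  rw [phase, phase, ← intervalIntegral.integral_symm]
  simpa [heven] using (intervalIntegral.integral_comp_neg (a := t) (b := 0)
    (fun s => h (s • ξ) ξ)).symm

variable [CompleteSpace H]

theorem gradient_phase_neg_time (heven : ∀ x ξ, h x (-ξ) = h x ξ) (t : ℝ) (ξ : H) :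
    gradient (phase h (-t)) ξ = gradient (phase h t) (-ξ) := by
  rw [funext (phase_neg_time heven t), gradient_fun_neg, gradient_comp_neg, neg_neg]

namespace IsHamiltonCurve

theorem timeReversal (hyη : IsHamiltonCurve h y η) (heven : ∀ x ξ, h x (-ξ) = h x ξ) :
    IsHamiltonCurve h (fun t => y (-t)) (fun t => -η (-t)) where
  hasDerivAt_position t := by
    have hgrad := gradient_comp_neg (h (y (-t))) (-η (-t))
    simp only [heven, neg_neg] at hgrad
    simpa [hgrad, Function.comp_def] using
      (hyη.hasDerivAt_position (-t)).scomp t (hasDerivAt_neg t)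
  hasDerivAt_momentum t := by
    simpa [heven, Function.comp_def] using
      ((hyη.hasDerivAt_momentum (-t)).scomp t (hasDerivAt_neg t)).fun_neg

theorem energy_eq (hyη : IsHamiltonCurve h y η) (hh : Differentiable ℝ fun z : H × H => h z.1 z.2)
    (s t : ℝ) : h (y s) (η s) = h (y t) (η t) := by
  have hderiv : ∀ t, HasDerivAt (fun t => h (y t) (η t)) 0 t := by
    intro t
    set D := fderiv ℝ (fun z : H × H => h z.1 z.2) (y t, η t)
    have hD : HasFDerivAt (fun z : H × H => h z.1 z.2) D (y t, η t) := (hh _).hasFDerivAt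
    have hpos : gradient (fun x => h x (η t)) (y t) = riesz (D.comp (.inl ℝ H H)) :=
      gradient_eq_riesz (hD.comp (f := (·, η t)) (y t) (hasFDerivAt_prodMk_left (y t) (η t)))
    have hmom : gradient (h (y t)) (η t) = riesz (D.comp (.inr ℝ H H)) :=
      gradient_eq_riesz (hD.comp (f := (y t, ·)) (η t) (hasFDerivAt_prodMk_right (y t) (η t)))
    refine (hD.comp_hasDerivAt t
      ((hyη.hasDerivAt_position t).prodMk (hyη.hasDerivAt_momentum t))).congr_deriv ?_
    calc D (gradient (h (y t)) (η t), -gradient (fun x => h x (η t)) (y t))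
        = D.comp (.inl ℝ H H) (gradient (h (y t)) (η t))
          - D.comp (.inr ℝ H H) (gradient (fun x => h x (η t)) (y t)) := by
          simp [← map_sub]
      _ = 0 := by
          rw [hpos, hmom, ← inner_riesz_left, ← inner_riesz_left, real_inner_comm, sub_self]
  exact is_const_of_deriv_eq_zero (fun t => (hderiv t).differentiableAt)
    (fun t => (hderiv t).deriv) s t

end IsHamiltonCurve

end Hamilton

section Kinetic

set_option maxSynthPendingDepth 3

variable {H : Type*} [NormedAddCommGroup H] [InnerProductSpace ℝ H]
  {B : H → H →L[ℝ] H →L[ℝ] ℝ}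

/-- The kinetic energy of the metric perturbed by the position-dependent bilinear form `B`, which
need not be symmetric. -/
def kinetic (B : H → H →L[ℝ] H →L[ℝ] ℝ) (x ξ : H) : ℝ :=
  1 / 2 * (‖ξ‖ ^ 2 + B x ξ ξ)

/-- The derivative in `x` of `kinetic B x ξ`. -/
def posDeriv (B : H → H →L[ℝ] H →L[ℝ] ℝ) (x ξ : H) : H →L[ℝ] ℝ :=
  (1 / 2 : ℝ) • ((fderiv ℝ B x).flip ξ).flip ξ

/-- The derivative in `ξ` of the perturbation part of `kinetic B x ξ`; the full derivative is
`innerSL ℝ ξ + momDeriv B x ξ`. -/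
def momDeriv (B : H → H →L[ℝ] H →L[ℝ] ℝ) (x ξ : H) : H →L[ℝ] ℝ :=
  (1 / 2 : ℝ) • (B x ξ + (B x).flip ξ)

theorem continuous_posDeriv_comp {X : Type*} [TopologicalSpace X] (hB : ContDiff ℝ 1 B)
    {x ξ : X → H} (hx : Continuous x) (hξ : Continuous ξ) :
    Continuous fun t => posDeriv B (x t) (ξ t) := by
  have hflip : Continuous fun t => (fderiv ℝ B (x t)).flip :=
    (ContinuousLinearMap.flipₗᵢ ℝ H H (H →L[ℝ] ℝ)).continuous.comp
      ((hB.continuous_fderiv one_ne_zero).comp hx)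
  have hflip_flip : Continuous fun t => ((fderiv ℝ B (x t)).flip (ξ t)).flip :=
    (ContinuousLinearMap.flipₗᵢ ℝ H H ℝ).continuous.comp (hflip.clm_apply hξ)
  exact (hflip_flip.clm_apply hξ).const_smul (1 / 2 : ℝ)

theorem continuous_momDeriv_comp {X : Type*} [TopologicalSpace X] (hB : Continuous B)
    {x ξ : X → H} (hx : Continuous x) (hξ : Continuous ξ) :
    Continuous fun t => momDeriv B (x t) (ξ t) := by
  have hflip : Continuous fun t => (B (x t)).flip :=
    (ContinuousLinearMap.flipₗᵢ ℝ H H ℝ).continuous.comp (hB.comp hx)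
  exact (((hB.comp hx).clm_apply hξ).add (hflip.clm_apply hξ)).const_smul (1 / 2 : ℝ)

theorem kinetic_neg (x ξ : H) : kinetic B x (-ξ) = kinetic B x ξ := by
  simp [kinetic]

theorem hasFDerivAt_kinetic (hB : Differentiable ℝ B) (z : H × H) :
    HasFDerivAt (fun z : H × H => kinetic B z.1 z.2)
      ((posDeriv B z.1 z.2).coprod (innerSL ℝ z.2 + momDeriv B z.1 z.2)) z := by
  have hform : HasFDerivAt (fun z : H × H => B z.1) ((fderiv ℝ B z.1).comp (.fst ℝ H H)) z :=
    (hB z.1).hasFDerivAt.comp z hasFDerivAt_fst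
  have hsq : HasFDerivAt (fun z : H × H => ‖z.2‖ ^ 2) _ z := hasFDerivAt_snd.norm_sq
  refine ((hsq.add ((hform.clm_apply hasFDerivAt_snd).clm_apply hasFDerivAt_snd)).const_mul
    (1 / 2)).congr_fderiv ?_
  ext v <;> simp [posDeriv, momDeriv]

theorem hasFDerivAt_kinetic_position (hB : Differentiable ℝ B) (x ξ : H) :
    HasFDerivAt (fun x => kinetic B x ξ) (posDeriv B x ξ) x :=
  ((hasFDerivAt_kinetic hB (x, ξ)).comp (f := (·, ξ)) x
    (hasFDerivAt_prodMk_left x ξ)).congr_fderiv (by ext; simp)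

theorem hasFDerivAt_kinetic_momentum (hB : Differentiable ℝ B) (x ξ : H) :
    HasFDerivAt (kinetic B x) (innerSL ℝ ξ + momDeriv B x ξ) ξ :=
  ((hasFDerivAt_kinetic hB (x, ξ)).comp (f := (x, ·)) ξ
    (hasFDerivAt_prodMk_right x ξ)).congr_fderiv (by ext; simp)

theorem hasFDerivAt_kinetic_ray (hB : Differentiable ℝ B) (s : ℝ) (ξ : H) :
    HasFDerivAt (fun ξ => kinetic B (s • ξ) ξ)
      (innerSL ℝ ξ + (momDeriv B (s • ξ) ξ + s • posDeriv B (s • ξ) ξ)) ξ :=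
  ((hasFDerivAt_kinetic hB (s • ξ, ξ)).comp (f := fun ξ => (s • ξ, ξ)) ξ
    (((hasFDerivAt_id ξ).const_smul s).prodMk (hasFDerivAt_id ξ))).congr_fderiv (by
      ext
      simp
      ring)

theorem norm_posDeriv_le (x ξ : H) : ‖posDeriv B x ξ‖ ≤ ‖fderiv ℝ B x‖ * ‖ξ‖ ^ 2 := by
  calc ‖posDeriv B x ξ‖ = 1 / 2 * ‖((fderiv ℝ B x).flip ξ).flip ξ‖ := by
        rw [posDeriv, norm_smul, Real.norm_of_nonneg (by norm_num)]
    _ ≤ ‖((fderiv ℝ B x).flip ξ).flip ξ‖ := mul_le_of_le_one_left (norm_nonneg _) (by norm_num)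
    _ ≤ ‖(fderiv ℝ B x).flip ξ‖ * ‖ξ‖ := by
        simpa using ((fderiv ℝ B x).flip ξ).flip.le_opNorm ξ
    _ ≤ ‖fderiv ℝ B x‖ * ‖ξ‖ * ‖ξ‖ := by
        gcongr
        simpa using (fderiv ℝ B x).flip.le_opNorm ξ
    _ = ‖fderiv ℝ B x‖ * ‖ξ‖ ^ 2 := by ring

theorem norm_momDeriv_le (x ξ : H) : ‖momDeriv B x ξ‖ ≤ ‖B x‖ * ‖ξ‖ := by
  have hflip : ‖(B x).flip ξ‖ ≤ ‖B x‖ * ‖ξ‖ := by simpa using (B x).flip.le_opNorm ξ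
  calc ‖momDeriv B x ξ‖ = 1 / 2 * ‖B x ξ + (B x).flip ξ‖ := by
        rw [momDeriv, norm_smul, Real.norm_of_nonneg (by norm_num)]
    _ ≤ 1 / 2 * (‖B x‖ * ‖ξ‖ + ‖B x‖ * ‖ξ‖) := by
        gcongr
        exact norm_add_le_of_le ((B x).le_opNorm ξ) hflip
    _ = ‖B x‖ * ‖ξ‖ := by ring

theorem norm_sq_le_kinetic {x : H} (hx : ‖B x‖ ≤ 1 / 2) (ξ : H) :
    ‖ξ‖ ^ 2 ≤ 4 * kinetic B x ξ := by
  have hform : |B x ξ ξ| ≤ 1 / 2 * ‖ξ‖ ^ 2 :=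
    calc |B x ξ ξ| ≤ ‖B x‖ * ‖ξ‖ * ‖ξ‖ := (B x).le_opNorm₂ ξ ξ
      _ ≤ 1 / 2 * ‖ξ‖ * ‖ξ‖ := by gcongr
      _ = 1 / 2 * ‖ξ‖ ^ 2 := by ring
  rw [kinetic]
  linarith [neg_abs_le (B x ξ ξ)]

variable [CompleteSpace H]

/-- The perturbation part of `∇_ξ (kinetic B (tξ) ξ)`, as a function of a position `z.1` and a
momentum `z.2` which are kept independent. The integrand of the gradient of the phase is its value
on the diagonal, and along a Hamilton curve `(y, η)` the derivative of `y - tη` is its value at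
`(y / t, η)`. -/
def rayGradient (B : H → H →L[ℝ] H →L[ℝ] ℝ) (t : ℝ) (z : H × H) : H :=
  riesz (momDeriv B (t • z.1) z.2 + t • posDeriv B (t • z.1) z.2)

theorem continuous_rayGradient (hB : ContDiff ℝ 1 B) (z : H × H) :
    Continuous fun t => rayGradient B t z := by
  have hx : Continuous fun t : ℝ => t • z.1 := by fun_prop
  exact riesz.continuous.comp ((continuous_momDeriv_comp hB.continuous hx continuous_const).add
    (continuous_id.smul (continuous_posDeriv_comp hB hx continuous_const)))

theorem gradient_phase_kinetic (hB : ContDiff ℝ 1 B) (t : ℝ) (ξ : H) :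
    gradient (phase (kinetic B) t) ξ =
      t • ξ + ∫ s in (0 : ℝ)..t, rayGradient B s (ξ, ξ) := by
  have hkin : ∀ ξ, Continuous fun s : ℝ => kinetic B (s • ξ) ξ := by
    have hB0 := hB.continuous
    unfold kinetic
    fun_prop
  have hderiv : Continuous fun q : H × ℝ => innerSL ℝ q.1 +
      (momDeriv B (q.2 • q.1) q.1 + q.2 • posDeriv B (q.2 • q.1) q.1) := by
    have hx : Continuous fun q : H × ℝ => q.2 • q.1 := by fun_prop
    exact ((innerSL ℝ).continuous.comp continuous_fst).add
      ((continuous_momDeriv_comp hB.continuous hx continuous_fst).add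
        (continuous_snd.smul (continuous_posDeriv_comp hB hx continuous_fst)))
  have hphase := hasFDerivAt_intervalIntegral_of_continuous hkin hderiv
    (fun ξ s => hasFDerivAt_kinetic_ray (hB.differentiable one_ne_zero) s ξ) 0 t ξ
  calc gradient (phase (kinetic B) t) ξ
      = ∫ s in (0 : ℝ)..t, (ξ + rayGradient B s (ξ, ξ)) := by
        refine (gradient_eq_riesz hphase).trans
          ((riesz.toContinuousLinearMap.intervalIntegral_comp_comm
            ((hderiv.comp (.prodMk_right ξ)).intervalIntegrable 0 t)).symm.trans ?_)
        simp [rayGradient]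
    _ = t • ξ + ∫ s in (0 : ℝ)..t, rayGradient B s (ξ, ξ) := by
        rw [intervalIntegral.integral_add intervalIntegrable_const
            ((continuous_rayGradient hB (ξ, ξ)).intervalIntegrable 0 t),
          intervalIntegral.integral_const, sub_zero]

end Kinetic

section Asymptotics

set_option maxSynthPendingDepth 3

variable {H : Type*} [NormedAddCommGroup H] [InnerProductSpace ℝ H] [CompleteSpace H]
  {B : H → H →L[ℝ] H →L[ℝ] ℝ} {ν c : ℝ} {y η : ℝ → H} {p : H}

theorem lipschitzDecayOn_rayGradient (hB : IsSymbol 2 ν B) (hν : 0 ≤ ν) (hp : p ≠ 0) :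
    LipschitzDecayOn (closedBall (p, p) (‖p‖ / 2)) ν (rayGradient B) := by
  set W := closedBall (p, p) (‖p‖ / 2)
  have hfst : Set.MapsTo Prod.fst W (closedBall p (‖p‖ / 2)) := fun z hz =>
    mem_closedBall.2 ((le_max_left _ _).trans (mem_closedBall.1 hz))
  have hξ : LipschitzDecayOn W 0 fun _ z => z.2 := .of_clm (.snd ℝ H H) isBounded_closedBall
  have hform : LipschitzDecayOn W ν fun t z => B (t • z.1) :=
    (hB.lipschitzDecayOn hν hp).comp_fst hfst
  have hfderiv : LipschitzDecayOn W (ν + 1) fun t z => fderiv ℝ B (t • z.1) :=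
    (hB.fderiv.lipschitzDecayOn (by linarith) hp).comp_fst hfst
  have hmom : LipschitzDecayOn W ν fun t z => momDeriv B (t • z.1) z.2 := by
    simpa only [add_zero, momDeriv] using
      ((hform.clm_apply hξ).add (hform.clm_flip.clm_apply hξ)).const_smul (1 / 2)
  have hpos : LipschitzDecayOn W (ν + 1) fun t z => posDeriv B (t • z.1) z.2 := by
    simpa only [add_zero, posDeriv] using
      ((hfderiv.clm_flip.clm_apply hξ).clm_flip.clm_apply hξ).const_smul (1 / 2)
  exact (hmom.add hpos.time_smul).clm_comp riesz.toContinuousLinearMap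

namespace IsHamiltonCurve

theorem hasDerivAt_position_kinetic (hyη : IsHamiltonCurve (kinetic B) y η)
    (hB : Differentiable ℝ B) (t : ℝ) :
    HasDerivAt y (η t + riesz (momDeriv B (y t) (η t))) t :=
  (hyη.hasDerivAt_position t).congr_deriv <| by
    simp [gradient_eq_riesz (hasFDerivAt_kinetic_momentum hB (y t) (η t))]

theorem hasDerivAt_momentum_kinetic (hyη : IsHamiltonCurve (kinetic B) y η)
    (hB : Differentiable ℝ B) (t : ℝ) :
    HasDerivAt η (-riesz (posDeriv B (y t) (η t))) t :=
  (hyη.hasDerivAt_momentum t).congr_deriv <| by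
    rw [gradient_eq_riesz (hasFDerivAt_kinetic_position hB (y t) (η t))]

theorem hasDerivAt_position_sub_smul_momentum (hyη : IsHamiltonCurve (kinetic B) y η)
    (hB : Differentiable ℝ B) {t : ℝ} (ht : t ≠ 0) :
    HasDerivAt (fun t => y t - t • η t) (rayGradient B t (t⁻¹ • y t, η t)) t := by
  refine ((hyη.hasDerivAt_position_kinetic hB t).sub
    ((hasDerivAt_id t).smul (hyη.hasDerivAt_momentum_kinetic hB t))).congr_deriv ?_
  simp [rayGradient, smul_inv_smul₀ ht]
  abel

theorem kinetic_eq (hyη : IsHamiltonCurve (kinetic B) y η) (hB : Differentiable ℝ B) (s t : ℝ) :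
    kinetic B (y s) (η s) = kinetic B (y t) (η t) :=
  hyη.energy_eq (fun z => (hasFDerivAt_kinetic hB z).differentiableAt) s t

theorem isBigO_momentum_one (hyη : IsHamiltonCurve (kinetic B) y η)
    (hB : IsSymbol 1 ν B) (hν : 0 < ν) (hc : 0 < c)
    (hy : ∀ᶠ t in atTop, c * t ≤ ‖y t‖) : η =O[atTop] fun _ => (1 : ℝ) := by
  have hsmall : ∀ᶠ t in atTop, ‖B (y t)‖ ≤ 1 / 2 :=
    (hB.tendsto_comp_zero hν hc hy).norm.eventually_le_const (by norm_num)
  refine IsBigO.of_bound √(4 * kinetic B (y 0) (η 0)) (hsmall.mono fun t ht => ?_)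
  rw [norm_one, mul_one, hyη.kinetic_eq (hB.contDiff.differentiable one_ne_zero) 0 t]
  exact Real.le_sqrt_of_sq_le (norm_sq_le_kinetic ht (η t))

theorem exists_momentum_limit (hyη : IsHamiltonCurve (kinetic B) y η)
    (hB : IsSymbol 1 ν B) (hν : 0 < ν) (hc : 0 < c)
    (hy : ∀ᶠ t in atTop, c * t ≤ ‖y t‖) :
    ∃ p, (fun t => η t - p) =O[atTop] fun t => t ^ (-ν) := by
  have hforce : (fun t => -riesz (posDeriv B (y t) (η t))) =O[atTop] fun t => t ^ (-ν - 1) := by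
    have hbound := (hB.fderiv.isBigO_comp (by linarith) hc hy).norm_left.mul
      ((hyη.isBigO_momentum_one hB hν hc hy).norm_left.pow 2)
    simp only [one_pow, mul_one, neg_add'] at hbound
    refine (IsBigO.of_norm_le fun t => ?_).trans hbound
    rw [norm_neg, riesz.norm_map]
    exact norm_posDeriv_le _ _
  exact exists_sub_isBigO_rpow_of_hasDerivAt hν (Eventually.of_forall
    (hyη.hasDerivAt_momentum_kinetic (hB.contDiff.differentiable one_ne_zero))) hforce

theorem momentum_limit_ne_zero (hyη : IsHamiltonCurve (kinetic B) y η)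
    (hB : IsSymbol 1 ν B) (hν : 0 < ν) (henergy : 0 < kinetic B (y 0) (η 0)) (hc : 0 < c)
    (hy : ∀ᶠ t in atTop, c * t ≤ ‖y t‖) (hp : Tendsto η atTop (𝓝 p)) : p ≠ 0 := by
  rintro rfl
  have heval : Continuous fun q : (H →L[ℝ] H →L[ℝ] ℝ) × H => q.1 q.2 q.2 := by fun_prop
  have hform : Tendsto (fun t => B (y t) (η t) (η t)) atTop (𝓝 0) := by
    simpa [Function.comp_def] using
      (heval.tendsto (0, 0)).comp ((hB.tendsto_comp_zero hν hc hy).prodMk_nhds hp)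
  have hzero : Tendsto (fun t => kinetic B (y t) (η t)) atTop (𝓝 0) := by
    simpa [kinetic] using ((hp.norm.pow 2).add hform).const_mul (2⁻¹ : ℝ)
  have hconst : Tendsto (fun t => kinetic B (y t) (η t)) atTop (𝓝 (kinetic B (y 0) (η 0))) :=
    tendsto_const_nhds.congr (hyη.kinetic_eq (hB.contDiff.differentiable one_ne_zero) 0)
  exact henergy.ne (tendsto_nhds_unique hzero hconst)

theorem isBigO_inv_smul_position_sub (hyη : IsHamiltonCurve (kinetic B) y η)
    (hB : IsSymbol 1 ν B) (hν : 0 < ν) (hν1 : ν < 1) (hc : 0 < c)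
    (hy : ∀ᶠ t in atTop, c * t ≤ ‖y t‖)
    (hp : (fun t => η t - p) =O[atTop] fun t => t ^ (-ν)) :
    (fun t => t⁻¹ • y t - p) =O[atTop] fun t => t ^ (-ν) := by
  have hmom : (fun t => riesz (momDeriv B (y t) (η t))) =O[atTop] fun t => t ^ (-ν) := by
    have hbound := (hB.isBigO_comp hν.le hc hy).norm_left.mul
      (hyη.isBigO_momentum_one hB hν hc hy).norm_left
    simp only [mul_one] at hbound
    refine (IsBigO.of_norm_le fun t => ?_).trans hbound
    rw [riesz.norm_map]
    exact norm_momDeriv_le _ _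
  have hderiv : ∀ᶠ t in atTop, HasDerivAt (fun t => y t - t • p)
      ((η t - p) + riesz (momDeriv B (y t) (η t))) t := Eventually.of_forall fun t =>
    ((hyη.hasDerivAt_position_kinetic (hB.contDiff.differentiable one_ne_zero) t).sub
      ((hasDerivAt_id t).smul_const p)).congr_deriv (by simp; abel)
  have hdiff : (fun t => y t - t • p) =O[atTop] fun t => t ^ (1 - ν) :=
    isBigO_rpow_of_hasDerivAt (by linarith) hderiv (by simpa using hp.add hmom)
  refine ((isBigO_refl (fun t : ℝ => t⁻¹) _).smul hdiff).congr' ?_ ?_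
  · filter_upwards [eventually_ne_atTop 0] with t ht
    rw [smul_sub, inv_smul_smul₀ ht]
  · filter_upwards [eventually_gt_atTop 0] with t ht
    rw [smul_eq_mul, ← Real.rpow_neg_one, ← Real.rpow_add ht]
    congr 1
    ring

theorem exists_tendsto_sub_gradient_phase (hyη : IsHamiltonCurve (kinetic B) y η)
    (hB : IsSymbol 2 ν B) (hν : 1 / 2 < ν) (hν1 : ν < 1)
    (henergy : 0 < kinetic B (y 0) (η 0)) (hc : 0 < c)
    (hy : ∀ᶠ t in atTop, c * t ≤ ‖y t‖) :
    ∃ x, Tendsto (fun t => y t - gradient (phase (kinetic B) t) (η t)) atTop (𝓝 x) := by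
  have hν0 : 0 < ν := by linarith
  have hB1 : IsSymbol 1 ν B := hB.mono_order one_le_two
  obtain ⟨p, hη⟩ := hyη.exists_momentum_limit hB1 hν0 hc hy
  have hp : p ≠ 0 := hyη.momentum_limit_ne_zero hB1 hν0 henergy hc hy <|
    tendsto_sub_nhds_zero_iff.1 (hη.trans_tendsto (tendsto_rpow_neg_atTop hν0))
  have hyt := hyη.isBigO_inv_smul_position_sub hB1 hν0 hν1 hc hy hη
  have hderiv : ∀ᶠ t in atTop, HasDerivAt (fun t => y t - t • η t)
      (rayGradient B t (t⁻¹ • y t, η t)) t := (eventually_ne_atTop 0).mono fun t ht =>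
    hyη.hasDerivAt_position_sub_smul_momentum (hB1.contDiff.differentiable one_ne_zero) ht
  obtain ⟨x, hx⟩ := (lipschitzDecayOn_rayGradient hB hν0.le hp).exists_tendsto_sub_integral
    (closedBall_mem_nhds _ (by positivity)) (continuous_rayGradient hB1.contDiff) hν hν1 hderiv
    (hyt.prod_left hη) (ζ := fun t => (η t, η t)) (hη.prod_left hη)
  refine ⟨x, hx.congr fun t => ?_⟩
  rw [gradient_phase_kinetic hB1.contDiff, sub_sub]

end IsHamiltonCurve

end Asymptotics

theorem stmt1_general {H : Type*} [NormedAddCommGroup H] [InnerProductSpace ℝ H] [CompleteSpace H]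
    {B : H → H →L[ℝ] H →L[ℝ] ℝ} {μ : ℝ} (hμ : 1 / 2 < μ) (hB : IsSymbol 2 μ B)
    {y η : ℝ → H} (hyη : IsHamiltonCurve (kinetic B) y η) (henergy : 0 < kinetic B (y 0) (η 0))
    {c C : ℝ} (hc : 0 < c) (hnt : ∀ t : ℝ, c * |t| - C ≤ ‖y t‖) :
    (∃ xp, Tendsto (fun t => y t - gradient (phase (kinetic B) t) (η t)) atTop (𝓝 xp)) ∧
    (∃ xm, Tendsto (fun t => y t - gradient (phase (kinetic B) t) (η t)) atBot (𝓝 xm)) := by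
  obtain ⟨ν, hν, hνmin⟩ := exists_between (lt_min hμ one_half_lt_one)
  obtain ⟨hνμ, hν1⟩ := lt_min_iff.1 hνmin
  have hBν : IsSymbol 2 ν B := hB.mono_decay hνμ.le
  have hescape : ∀ᶠ t in atTop, c / 2 * t ≤ c * |t| - C := by
    filter_upwards [eventually_ge_atTop 0, eventually_ge_atTop (2 * C / c)] with t ht htC
    rw [div_le_iff₀ hc] at htC
    rw [abs_of_nonneg ht]
    linarith
  refine ⟨hyη.exists_tendsto_sub_gradient_phase hBν hν hν1 henergy (half_pos hc)
    (hescape.mono fun t ht => ht.trans (hnt t)), ?_⟩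
  obtain ⟨x, hx⟩ := (hyη.timeReversal kinetic_neg).exists_tendsto_sub_gradient_phase
    hBν hν hν1 (by simpa [kinetic_neg] using henergy) (half_pos hc)
    (hescape.mono fun t ht => ht.trans (by simpa using hnt (-t)))
  refine ⟨x, (hx.comp tendsto_neg_atBot_atTop).congr fun t => ?_⟩
  simp [← gradient_phase_neg_time kinetic_neg]

section Coordinates

variable {d : ℕ} {μ : ℝ} {a : Fin d → Fin d → E d → ℝ} {V : E d → ℝ}

/-- The bilinear form `Σ (a_{mn}(x) - δ_{mn}) ξ_m ξ'_n`, the deviation of the metric `a` from the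
Euclidean one. -/
def perturbation (a : Fin d → Fin d → E d → ℝ) (x : E d) : E d →L[ℝ] E d →L[ℝ] ℝ :=
  ∑ m, ∑ n, (a m n x - if m = n then 1 else 0) •
    (EuclideanSpace.proj m : E d →L[ℝ] ℝ).smulRight (EuclideanSpace.proj n : E d →L[ℝ] ℝ)

theorem kk_eq_kinetic (a : Fin d → Fin d → E d → ℝ) : kk a = kinetic (perturbation a) := by
  ext x ξ
  rw [kinetic, EuclideanSpace.real_norm_sq_eq]
  simp [kk, perturbation, sub_mul, Finset.sum_sub_distrib, sq, mul_assoc]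

theorem Psi_eq_phase (a : Fin d → Fin d → E d → ℝ) : Psi a = phase (kinetic (perturbation a)) := by
  rw [← kk_eq_kinetic]
  rfl

theorem IsHamiltonSol.isHamiltonCurve {h : E d → E d → ℝ} {y η : ℝ → E d}
    (hyη : IsHamiltonSol h y η) : IsHamiltonCurve h y η :=
  ⟨fun t => (hyη t).1, fun t => (hyη t).2⟩

theorem AssumptionA.kk_pos (hA : AssumptionA μ a V) (x : E d) {ξ : E d} (hξ : ξ ≠ 0) :
    0 < kk a x ξ :=
  mul_pos one_half_pos (hA.2.2.2.1 x ξ hξ)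

theorem AssumptionA.isSymbol_perturbation (hA : AssumptionA μ a V) (n : ℕ) :
    IsSymbol n μ (perturbation a) := by
  obtain ⟨ha, -, -, -, hdecay, -⟩ := hA
  refine .sum fun i _ => .sum fun j _ => ?_
  have hentry : IsSymbol n μ fun x => a i j x - if i = j then 1 else 0 :=
    ⟨((ha i j).of_le (by exact_mod_cast le_top)).sub contDiff_const, fun k _ =>
      (hdecay i j k).imp fun C hC => hC.2⟩
  exact hentry.clm_comp (.toSpanSingleton ℝ _)

end Coordinates

/-- Proposition 1 (existence of asymptotic positions). -/
theorem stmt1 (d : ℕ) (hd : 1 ≤ d) (μ : ℝ) (hμ : 1 / 2 < μ) (hμ1 : μ ≤ 1)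
    (a : Fin d → Fin d → E d → ℝ) (V : E d → ℝ) (hA : AssumptionA μ a V)
    (y η : ℝ → E d) (ξ0 : E d) (hξ0 : ξ0 ≠ 0) (hη0 : η 0 = ξ0)
    (hHam : IsHamiltonSol (kk a) y η)
    (c C : ℝ) (hc : 0 < c) (hC : 0 < C) (hnt : ∀ t : ℝ, c * |t| - C ≤ ‖y t‖) :
    (∃ xp : E d, Tendsto (fun t => y t - gradient (Psi a t) (η t)) atTop (𝓝 xp)) ∧
    (∃ xm : E d, Tendsto (fun t => y t - gradient (Psi a t) (η t)) atBot (𝓝 xm)) := by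
  simpa only [Psi_eq_phase] using stmt1_general hμ (hA.isSymbol_perturbation 2)
    (kk_eq_kinetic a ▸ hHam.isHamiltonCurve) (kk_eq_kinetic a ▸ hA.kk_pos _ (hη0 ▸ hξ0)) hc hnt
end
end
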